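/- Let X be a set and k a symmetric positive-definite kernel on X with C_k := sup_{x,x'} k(x,x') < ∞. Let Q be a probability measure on X and Q^n = (1/n) Σ_{i=1}^n δ_{x_i} the empirical measure of n i.i.d. samples x_1,…,x_n from Q. Then for any probability measure P on X and any δ ∈ (0,1), with probability at least 1−δ, |MMD_k(P,Q) − MMD_k(P,Q^n)| ≤ 2√(C_k/n) + √(2 C_k log(1/δ)/n); in particular |MMD_k(P,Q) − MMD_k(P,Q^n)| = O(n^{−1/2}) with high probability. -/

import Mathlib

open MeasureTheory ENNReal

/-- A symmetric, positive-definite kernel. -/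
def IsPosDefKernel {𝒳 : Type*} (k : 𝒳 → 𝒳 → ℝ) : Prop :=
  (∀ x y, k x y = k y x) ∧
    ∀ (n : ℕ) (x : Fin n → 𝒳) (a : Fin n → ℝ),
      0 ≤ ∑ i, ∑ j, a i * a j * k (x i) (x j)

/-- The squared maximum mean discrepancy between two measures, given by the kernel-integral
formula `∫∫ k dP dP − 2 ∫∫ k dP dQ + ∫∫ k dQ dQ`. -/
noncomputable def mmdSq {𝒳 : Type*} [MeasurableSpace 𝒳] (k : 𝒳 → 𝒳 → ℝ)
    (P Q : Measure 𝒳) : ℝ :=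
  (∫ x, ∫ y, k x y ∂P ∂P) - 2 * (∫ x, ∫ y, k x y ∂Q ∂P) + (∫ x, ∫ y, k x y ∂Q ∂Q)

/-- The maximum mean discrepancy, the nonnegative square root of `mmdSq`. -/
noncomputable def mmd {𝒳 : Type*} [MeasurableSpace 𝒳] (k : 𝒳 → 𝒳 → ℝ)
    (P Q : Measure 𝒳) : ℝ :=
  Real.sqrt (mmdSq k P Q)

/-- The empirical measure `(1/n) ∑ᵢ δ_{x i}` of the points `x : Fin n → 𝒳`. -/
noncomputable def empiricalMeasure {𝒳 : Type*} [MeasurableSpace 𝒳] {n : ℕ}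
    (x : Fin n → 𝒳) : Measure 𝒳 :=
  (n : ℝ≥0∞)⁻¹ • ∑ i, Measure.dirac (x i)

open ProbabilityTheory
open scoped RealInnerProductSpace NNReal

/-!
Write `k x y = ⟪φ x, φ y⟫` with a feature map `φ` into a Hilbert space. Then `mmd k P Q` is the
distance between the mean embeddings of `P` and `Q`, so by the triangle inequality the error is at
most the distance `D = ‖m - n⁻¹ ∑ᵢ φ(Xᵢ)‖` from the mean embedding `m` of `Q` to that of the sample.
Replacing one sample point moves `D` by at most `2 √Ck / n`, so McDiarmid's inequality bounds
`D - 𝔼 D` by `√(2 Ck log (1 / δ) / n)`. Independence kills the off-diagonal terms of `𝔼 D²`, whence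
`𝔼 D ≤ √(𝔼 D²) ≤ √(Ck / n)`. The event does not depend on `P`.
-/

section Probability

variable {Ω : Type*} [MeasurableSpace Ω] {μ : Measure Ω}

theorem integral_le_sqrt_integral_sq [IsProbabilityMeasure μ] {Z : Ω → ℝ} (hZ : MemLp Z 2 μ) :
    ∫ ω, Z ω ∂μ ≤ √(∫ ω, Z ω ^ 2 ∂μ) := by
  have h := variance_nonneg Z μ
  rw [variance_eq_sub hZ] at h
  exact Real.le_sqrt_of_sq_le (sub_nonneg.1 h)

theorem one_sub_ofReal_le_measure_compl [IsProbabilityMeasure μ] {s : Set Ω} {δ : ℝ}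
    (hs : μ.real s ≤ δ) : 1 - ENNReal.ofReal δ ≤ μ sᶜ := by
  have measure_le : μ s ≤ ENNReal.ofReal δ := by
    rw [← ofReal_measureReal]
    exact ENNReal.ofReal_le_ofReal hs
  calc 1 - ENNReal.ofReal δ ≤ μ Set.univ - μ s := by
        rw [measure_univ]
        exact tsub_le_tsub_left measure_le 1
    _ ≤ μ (Set.univ \ s) := le_measure_sdiff
    _ = μ sᶜ := by rw [Set.compl_eq_univ_sdiff]

theorem measureReal_sqrt_log_lt_le [IsFiniteMeasure μ] {Z : Ω → ℝ} {c : ℝ≥0}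
    (hZ : HasSubgaussianMGF Z c μ) {δ : ℝ} (hδ : δ ∈ Set.Ioo (0 : ℝ) 1) :
    μ.real {ω | √(2 * c * Real.log (1 / δ)) < Z ω} ≤ δ := by
  have log_nonneg : 0 ≤ Real.log (1 / δ) := Real.log_nonneg (one_le_one_div hδ.1 hδ.2.le)
  obtain rfl | hc := eq_or_ne c 0
  · have null : μ {ω | √(2 * (0 : ℝ≥0) * Real.log (1 / δ)) < Z ω} = 0 := by
      refine measure_eq_zero_iff_ae_notMem.2 ?_
      filter_upwards [hZ.ae_eq_zero_of_hasSubgaussianMGF_zero] with ω hω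
      simp [hω]
    rw [measureReal_def, null, ENNReal.toReal_zero]
    exact hδ.1.le
  calc μ.real {ω | √(2 * c * Real.log (1 / δ)) < Z ω}
      ≤ μ.real {ω | √(2 * c * Real.log (1 / δ)) ≤ Z ω} := measureReal_mono fun ω ↦ le_of_lt (α := ℝ)
    _ ≤ Real.exp (-√(2 * c * Real.log (1 / δ)) ^ 2 / (2 * c)) :=
        hZ.measure_ge_le (Real.sqrt_nonneg _)
    _ = δ := by
        rw [Real.sq_sqrt (by positivity), neg_div, mul_div_cancel_left₀ _ (by positivity),
          one_div, Real.log_inv, neg_neg, Real.exp_log hδ.1]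

theorem hasSubgaussianMGF_add_prod {α β : Type*} [MeasurableSpace α] [MeasurableSpace β]
    {μ : Measure α} {ν : Measure β} [SFinite μ] [SFinite ν] {X : α → ℝ} {Y : α × β → ℝ}
    {cX cY : ℝ≥0} (hX : HasSubgaussianMGF X cX μ) (hY_meas : Measurable Y)
    (hY : ∀ a, HasSubgaussianMGF (fun b ↦ Y (a, b)) cY ν) :
    HasSubgaussianMGF (fun p ↦ X p.1 + Y p) (cX + cY) (μ.prod ν) := by
  have exp_add (t : ℝ) (p : α × β) :
      Real.exp (t * (X p.1 + Y p)) = Real.exp (t * X p.1) * Real.exp (t * Y p) := by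
    rw [mul_add, Real.exp_add]
  have meas (t : ℝ) :
      AEStronglyMeasurable (fun p ↦ Real.exp (t * X p.1) * Real.exp (t * Y p)) (μ.prod ν) :=
    ((hX.integrable_exp_mul t).aestronglyMeasurable.comp_fst).mul
      (hY_meas.const_mul t).exp.aestronglyMeasurable
  have slice_le (t : ℝ) (a : α) : ∫ b, Real.exp (t * X a) * Real.exp (t * Y (a, b)) ∂ν ≤
      Real.exp (t * X a) * Real.exp (cY * t ^ 2 / 2) := by
    rw [integral_const_mul]
    exact mul_le_mul_of_nonneg_left ((hY a).mgf_le t) (Real.exp_nonneg _)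
  have majorant (t : ℝ) := (hX.integrable_exp_mul t).mul_const (Real.exp (cY * t ^ 2 / 2))
  have integrable (t : ℝ) :
      Integrable (fun p ↦ Real.exp (t * X p.1) * Real.exp (t * Y p)) (μ.prod ν) := by
    refine (integrable_prod_iff (meas t)).2
      ⟨.of_forall fun a ↦ ((hY a).integrable_exp_mul t).const_mul (Real.exp (t * X a)), ?_⟩
    refine (majorant t).mono' (meas t).norm.integral_prod_right' (.of_forall fun a ↦ ?_)
    simp only [norm_mul, Real.norm_eq_abs, Real.abs_exp]
    rw [abs_of_nonneg (integral_nonneg fun b ↦ by positivity)]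
    exact slice_le t a
  refine ⟨fun t ↦ by simpa only [exp_add] using integrable t, fun t ↦ ?_⟩
  calc mgf (fun p ↦ X p.1 + Y p) (μ.prod ν) t
      = ∫ a, ∫ b, Real.exp (t * X a) * Real.exp (t * Y (a, b)) ∂ν ∂μ := by
        simp only [mgf, exp_add, integral_prod _ (integrable t)]
    _ ≤ ∫ a, Real.exp (t * X a) * Real.exp (cY * t ^ 2 / 2) ∂μ :=
        integral_mono (integrable t).integral_prod_left (majorant t) (slice_le t)
    _ = mgf X μ t * Real.exp (cY * t ^ 2 / 2) := integral_mul_const _ _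
    _ ≤ Real.exp (cX * t ^ 2 / 2) * Real.exp (cY * t ^ 2 / 2) :=
        mul_le_mul_of_nonneg_right (hX.mgf_le t) (Real.exp_nonneg _)
    _ = Real.exp ((cX + cY : ℝ≥0) * t ^ 2 / 2) := by
        rw [← Real.exp_add, NNReal.coe_add]
        ring_nf

theorem integrable_of_abs_sub_le [IsFiniteMeasure μ] {f : Ω → ℝ} (hf : Measurable f) {c : ℝ}
    (hc : ∀ x y, |f x - f y| ≤ c) : Integrable f μ := by
  rcases isEmpty_or_nonempty Ω with _ | ⟨⟨x₀⟩⟩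
  · exact .of_isEmpty
  refine .of_bound hf.aestronglyMeasurable (c + |f x₀|) (.of_forall fun x ↦ ?_)
  rw [Real.norm_eq_abs]
  linarith [abs_sub_abs_le_abs_sub (f x) (f x₀), hc x x₀]

theorem hasSubgaussianMGF_of_abs_sub_le [IsProbabilityMeasure μ] {f : Ω → ℝ} (hf : Measurable f)
    {c : ℝ≥0} (hc : ∀ x y, |f x - f y| ≤ c) :
    HasSubgaussianMGF (fun x ↦ f x - ∫ y, f y ∂μ) ((c / 2) ^ 2) μ := by
  have : Nonempty Ω := nonempty_of_isProbabilityMeasure μ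
  have bounded_below (x : Ω) : f x - c ∈ lowerBounds (Set.range f) := by
    rintro _ ⟨y, rfl⟩
    linarith [(abs_le.1 (hc x y)).2]
  have range_subset (x : Ω) : f x ∈ Set.Icc (⨅ y, f y) ((⨅ y, f y) + c) :=
    ⟨ciInf_le ⟨_, bounded_below x⟩ x,
      by linarith [le_ciInf fun y ↦ bounded_below x (Set.mem_range_self y)]⟩
  simpa using hasSubgaussianMGF_of_mem_Icc hf.aemeasurable (.of_forall range_subset)

end Probability

section Pi

variable {n : ℕ} {α : Fin (n + 1) → Type*} [∀ i, MeasurableSpace (α i)] (ν : ∀ i, Measure (α i))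
  [∀ i, SigmaFinite (ν i)]

theorem measurePreserving_finCons :
    MeasurePreserving (fun p : α 0 × (∀ i : Fin n, α i.succ) ↦ (Fin.cons p.1 p.2 : ∀ i, α i))
      ((ν 0).prod (Measure.pi fun i ↦ ν i.succ)) (Measure.pi ν) := by
  simpa only [MeasurableEquiv.piFinSuccAbove_symm_apply, Fin.insertNthEquiv_zero] using!
    (measurePreserving_piFinSuccAbove ν 0).symm

theorem integral_integral_finCons {f : (∀ i, α i) → ℝ} (hf : Integrable f (Measure.pi ν)) :
    ∫ a, ∫ b, f (Fin.cons a b) ∂Measure.pi (fun i ↦ ν (Fin.succ i)) ∂ν 0 =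
      ∫ x, f x ∂Measure.pi ν := by
  have hcons := measurePreserving_finCons ν
  rw [← hcons.map_eq] at hf ⊢
  rw [integral_map hcons.aemeasurable hf.aestronglyMeasurable,
    ← integral_prod (fun p ↦ f (Fin.cons p.1 p.2)) (hf.comp_aemeasurable hcons.aemeasurable)]

end Pi

/-- The bounded differences property: replacing the `i`-th coordinate changes the value of `f` by at
most `c i`. -/
def HasBoundedDifferences {ι : Type*} [DecidableEq ι] {α : ι → Type*} (f : (∀ i, α i) → ℝ)
    (c : ι → ℝ≥0) : Prop :=
  ∀ x i a, |f x - f (Function.update x i a)| ≤ c i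

namespace HasBoundedDifferences

theorem abs_sub_le_sum {ι : Type*} [Fintype ι] [DecidableEq ι] {α : ι → Type*}
    {f : (∀ i, α i) → ℝ} {c : ι → ℝ≥0} (hf : HasBoundedDifferences f c) (x y : ∀ i, α i) :
    |f x - f y| ≤ ∑ i, c i := by
  have piecewise (s : Finset ι) : |f x - f (s.piecewise y x)| ≤ ∑ i ∈ s, c i := by
    induction s using Finset.induction_on with
    | empty => simp
    | insert i s hi ih =>
      rw [Finset.sum_insert hi, Finset.piecewise_insert, add_comm]
      push_cast at ih ⊢
      exact (abs_sub_le _ _ _).trans (add_le_add ih (hf _ _ _))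
  simpa using piecewise Finset.univ

theorem integrable {ι : Type*} [Finite ι] [DecidableEq ι] {α : ι → Type*}
    [∀ i, MeasurableSpace (α i)] {f : (∀ i, α i) → ℝ} {c : ι → ℝ≥0}
    (hf : HasBoundedDifferences f c) (hf_meas : Measurable f) (μ : Measure (∀ i, α i))
    [IsFiniteMeasure μ] : Integrable f μ := by
  have := Fintype.ofFinite ι
  exact integrable_of_abs_sub_le hf_meas hf.abs_sub_le_sum

theorem abs_sub_cons_le {n : ℕ} {α : Fin (n + 1) → Type*} {f : (∀ i, α i) → ℝ}
    {c : Fin (n + 1) → ℝ≥0} (hf : HasBoundedDifferences f c) (a a' : α 0)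
    (b : ∀ i : Fin n, α i.succ) : |f (Fin.cons a b) - f (Fin.cons a' b)| ≤ c 0 := by
  simpa only [Fin.update_cons_zero] using hf (Fin.cons a b) 0 a'

theorem comp_cons {n : ℕ} {α : Fin (n + 1) → Type*} {f : (∀ i, α i) → ℝ}
    {c : Fin (n + 1) → ℝ≥0} (hf : HasBoundedDifferences f c) (a : α 0) :
    HasBoundedDifferences (fun b : ∀ i : Fin n, α i.succ ↦ f (Fin.cons a b)) fun i ↦ c i.succ :=
  fun b i y ↦ by simpa only [Fin.cons_update] using hf (Fin.cons a b) i.succ y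

/-- Condition on the first coordinate: the conditional mean is handled by Hoeffding's lemma and the
conditional fluctuation, for every value of that coordinate, by induction. -/
theorem hasSubgaussianMGF_pi {n : ℕ} {α : Fin n → Type*} [∀ i, MeasurableSpace (α i)]
    (ν : ∀ i, Measure (α i)) [∀ i, IsProbabilityMeasure (ν i)] {f : (∀ i, α i) → ℝ}
    {c : Fin n → ℝ≥0} (hf : HasBoundedDifferences f c) (hf_meas : Measurable f) :
    HasSubgaussianMGF (fun x ↦ f x - ∫ y, f y ∂Measure.pi ν) (∑ i, (c i / 2) ^ 2)
      (Measure.pi ν) := by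
  induction n with
  | zero =>
    simpa using hasSubgaussianMGF_of_abs_sub_le (μ := .pi ν) hf_meas (c := 0) hf.abs_sub_le_sum
  | succ n ih =>
    let ν' := Measure.pi fun i ↦ ν (Fin.succ i)
    have split : MeasurePreserving (fun x ↦ (x 0, Fin.tail x)) (Measure.pi ν) ((ν 0).prod ν') :=
      measurePreserving_piFinSuccAbove ν 0
    let F (a : α 0) : ℝ := ∫ b, f (Fin.cons a b) ∂ν'
    have cons_meas : Measurable fun p : α 0 × (∀ i : Fin n, α i.succ) ↦ f (Fin.cons p.1 p.2) :=
      hf_meas.comp (measurePreserving_finCons ν).measurable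
    have slice_meas (a : α 0) : Measurable fun b ↦ f (Fin.cons a b) :=
      cons_meas.comp measurable_prodMk_left
    have slice_integrable (a : α 0) := (hf.comp_cons a).integrable (slice_meas a) ν'
    have F_meas : Measurable F := cons_meas.stronglyMeasurable.integral_prod_right'.measurable
    have F_osc (a a' : α 0) : |F a - F a'| ≤ c 0 := by
      rw [← integral_sub (slice_integrable a) (slice_integrable a')]
      have norm_le (b) : ‖f (Fin.cons a b) - f (Fin.cons a' b)‖ ≤ c 0 := hf.abs_sub_cons_le a a' b
      simpa using norm_integral_le_of_norm_le_const (μ := ν') (.of_forall norm_le)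
    have mean : ∫ a, F a ∂ν 0 = ∫ x, f x ∂Measure.pi ν :=
      integral_integral_finCons ν (hf.integrable hf_meas _)
    have h := hasSubgaussianMGF_add_prod (hasSubgaussianMGF_of_abs_sub_le (μ := ν 0) F_meas F_osc)
      (cons_meas.sub (F_meas.comp measurable_fst)) fun a ↦
        ih (fun i ↦ ν i.succ) (hf.comp_cons a) (slice_meas a)
    rw [← split.map_eq] at h
    convert h.of_map split.measurable.aemeasurable using 1
    · ext x
      simp [mean, Fin.cons_self_tail]
    · exact Fin.sum_univ_succ _

theorem hasSubgaussianMGF_of_iIndepFun {Ω : Type*} [MeasurableSpace Ω] {μ : Measure Ω} {n : ℕ}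
    {α : Fin n → Type*} [∀ i, MeasurableSpace (α i)] {f : (∀ i, α i) → ℝ} {c : Fin n → ℝ≥0}
    (hf : HasBoundedDifferences f c) (hf_meas : Measurable f) {X : ∀ i, Ω → α i}
    (hX : ∀ i, Measurable (X i)) (hindep : iIndepFun X μ) :
    HasSubgaussianMGF (fun ω ↦ f (fun i ↦ X i ω) - ∫ ω', f (fun i ↦ X i ω') ∂μ)
      (∑ i, (c i / 2) ^ 2) μ := by
  have := hindep.isProbabilityMeasure
  have (i : Fin n) : IsProbabilityMeasure (μ.map (X i)) :=
    Measure.isProbabilityMeasure_map (hX i).aemeasurable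
  have hX' : Measurable fun ω i ↦ X i ω := measurable_pi_iff.2 hX
  have h := hf.hasSubgaussianMGF_pi (fun i ↦ μ.map (X i)) hf_meas
  rw [← hindep.map_fun_eq_pi_map fun i ↦ (hX i).aemeasurable,
    integral_map hX'.aemeasurable hf_meas.aestronglyMeasurable] at h
  exact h.of_map hX'.aemeasurable

end HasBoundedDifferences

theorem hasBoundedDifferences_norm_sum {ι E : Type*} [Fintype ι] [DecidableEq ι]
    [SeminormedAddCommGroup E] {α : ι → Type*} {ψ : ∀ i, α i → E} {c : ι → ℝ≥0}
    (hψ : ∀ i a b, ‖ψ i a - ψ i b‖ ≤ c i) :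
    HasBoundedDifferences (fun x : ∀ i, α i ↦ ‖∑ i, ψ i (x i)‖) c := by
  intro x i a
  have diff : ∑ j, ψ j (x j) - ∑ j, ψ j (Function.update x i a j) = ψ i (x i) - ψ i a := by
    rw [← Finset.sum_sub_distrib, Fintype.sum_eq_single i fun j hj ↦ by
      rw [Function.update_of_ne hj, sub_self], Function.update_self]
  exact (abs_norm_sub_norm_le _ _).trans (diff ▸ hψ i (x i) a)

namespace IsPosDefKernel

theorem finset_sum_nonneg {𝒳 : Type*} {k : 𝒳 → 𝒳 → ℝ} (hk : IsPosDefKernel k)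
    (s : Finset 𝒳) (a : 𝒳 → ℝ) : 0 ≤ ∑ x ∈ s, ∑ y ∈ s, a x * a y * k x y := by
  have h := hk.2 s.card (fun i ↦ s.equivFin.symm i) (fun i ↦ a (s.equivFin.symm i))
  rw [Equiv.sum_comp s.equivFin.symm
    (fun x : s ↦ ∑ j, a x * a (s.equivFin.symm j) * k x (s.equivFin.symm j))] at h
  simp_rw [fun x : s ↦ Equiv.sum_comp s.equivFin.symm (fun y : s ↦ a x * a y * k x y)] at h
  simpa only [← Finset.sum_coe_sort s] using h

/- `RKHS.OfKernel` takes operator-valued kernels, so the scalar `k x y` is read as a homothety of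
`ℝ`. -/
theorem posSemidef_smul_id {𝒳 : Type*} {k : 𝒳 → 𝒳 → ℝ} (hk : IsPosDefKernel k) :
    (Matrix.of fun x y ↦ k x y • ContinuousLinearMap.id ℝ ℝ).PosSemidef := by
  have hermitian : (Matrix.of fun x y ↦ k x y • ContinuousLinearMap.id ℝ ℝ).IsHermitian := by
    ext x y
    simp [hk.1 x y, ContinuousLinearMap.star_eq_adjoint, ContinuousLinearMap.adjoint_id]
  refine (RKHS.posSemidef_tfae.out 0 2).2 (And.intro hermitian fun a ↦ ?_)
  simpa [Finsupp.sum, mul_assoc, mul_comm, mul_left_comm, hk.1] using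
    hk.finset_sum_nonneg a.support a

theorem exists_featureMap.{u} {𝒳 : Type u} {k : 𝒳 → 𝒳 → ℝ} (hk : IsPosDefKernel k) :
    ∃ (H : Type u) (_ : NormedAddCommGroup H) (_ : InnerProductSpace ℝ H) (_ : CompleteSpace H)
      (φ : 𝒳 → H), ∀ x y, ⟪φ x, φ y⟫ = k x y := by
  have := Fact.mk hk.posSemidef_smul_id
  let H := RKHS.OfKernel (Matrix.of fun x y ↦ k x y • ContinuousLinearMap.id ℝ ℝ)
  refine ⟨H, inferInstance, inferInstance, inferInstance, fun x ↦ RKHS.kerFun H x 1, fun x y ↦ ?_⟩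
  rw [← RKHS.kernel_inner, RKHS.OfKernel.kernel_ofKernel]
  simp [hk.1 x y]

end IsPosDefKernel

section FeatureMap

variable {𝒳 H : Type*} [NormedAddCommGroup H] [InnerProductSpace ℝ H]
  {φ : 𝒳 → H} [MeasurableSpace 𝒳]

/-- Joint measurability of the Gram kernel `(x, y) ↦ ⟪φ x, φ y⟫` of a feature map. Only the kernel
is known to be measurable: the features may span a nonseparable space, so `φ` itself is never
required to be measurable. -/
def MeasurableGram (φ : 𝒳 → H) : Prop :=
  Measurable fun p : 𝒳 × 𝒳 ↦ ⟪φ p.1, φ p.2⟫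

/-- `m` is the mean embedding of `P` under the feature map `φ`, that is, the weak (Pettis) integral
of `φ`. The Bochner integral is not an option because `φ` need not be strongly measurable. -/
structure IsMeanEmbedding (φ : 𝒳 → H) (P : Measure 𝒳) (m : H) : Prop where
  integrable_inner (f : H) : Integrable (fun x ↦ ⟪φ x, f⟫) P
  integral_inner (f : H) : ∫ x, ⟪φ x, f⟫ ∂P = ⟪m, f⟫

namespace MeasurableGram

variable {α : Type*} [MeasurableSpace α]

theorem comp (hφ : MeasurableGram φ) {X Y : α → 𝒳} (hX : Measurable X) (hY : Measurable Y) :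
    Measurable fun a ↦ ⟪φ (X a), φ (Y a)⟫ :=
  Measurable.comp hφ (hX.prodMk hY)

theorem norm (hφ : MeasurableGram φ) : Measurable fun x ↦ ‖φ x‖ := by
  simpa only [norm_eq_sqrt_real_inner] using (hφ.comp measurable_id' measurable_id').sqrt

theorem norm_sum (hφ : MeasurableGram φ) {ι : Type*} [Fintype ι] {X : ι → α → 𝒳}
    (hX : ∀ i, Measurable (X i)) : Measurable fun a ↦ ‖∑ i, φ (X i a)‖ := by
  simp only [norm_eq_sqrt_real_inner, sum_inner, inner_sum]
  exact (Finset.measurable_sum _ fun i _ ↦ Finset.measurable_sum _ fun j _ ↦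
    hφ.comp (hX _) (hX _)).sqrt

/-- The Gram kernel only sees the closed span of the features; on that subspace measurability passes
to limits of linear combinations, and its orthogonal complement contributes zero. -/
theorem inner_right [CompleteSpace H] (hφ : MeasurableGram φ) (f : H) :
    Measurable fun x ↦ ⟪φ x, f⟫ := by
  let S := (Submodule.span ℝ (Set.range φ)).topologicalClosure
  have measurable_of_mem_span (g : H) (hg : g ∈ Submodule.span ℝ (Set.range φ)) :
      Measurable fun x ↦ ⟪φ x, g⟫ := by
    induction hg using Submodule.span_induction with
    | mem g hg =>
      obtain ⟨y, rfl⟩ := hg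
      exact hφ.comp measurable_id measurable_const
    | zero => simp
    | add g g' _ _ hg hg' =>
      simp only [inner_add_right]
      exact hg.add hg'
    | smul c g _ hg => simpa only [real_inner_smul_right] using hg.const_mul c
  have measurable_of_mem (g : H) (hg : g ∈ S) : Measurable fun x ↦ ⟪φ x, g⟫ := by
    obtain ⟨u, hu, hug⟩ := mem_closure_iff_seq_limit.1 hg
    exact measurable_of_tendsto_metrizable (fun n ↦ measurable_of_mem_span (u n) (hu n))
      (tendsto_pi_nhds.2 fun x ↦ tendsto_const_nhds.inner hug)
  have mem_S (x : 𝒳) : φ x ∈ S :=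
    Submodule.le_topologicalClosure _ (Submodule.subset_span (Set.mem_range_self x))
  have : CompleteSpace S := (Submodule.isClosed_topologicalClosure _).completeSpace_coe
  have inner_starProjection (x : 𝒳) : ⟪φ x, f⟫ = ⟪φ x, S.starProjection f⟫ := by
    rw [← sub_eq_zero, ← inner_sub_right]
    exact S.sub_starProjection_mem_orthogonal f _ (mem_S x)
  simpa only [inner_starProjection] using measurable_of_mem _ (S.starProjection_apply_mem f)

theorem sub_const [CompleteSpace H] (hφ : MeasurableGram φ) (m : H) :
    MeasurableGram fun x ↦ φ x - m := by
  simp only [MeasurableGram, inner_sub_left, inner_sub_right, real_inner_comm _ m]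
  have h := hφ.inner_right m
  exact (Measurable.sub hφ (h.comp measurable_snd)).sub
    ((h.comp measurable_fst).sub measurable_const)

theorem exists_isMeanEmbedding [CompleteSpace H] (hφ : MeasurableGram φ) {P : Measure 𝒳}
    (hP : Integrable (fun x ↦ ‖φ x‖) P) : ∃ m, IsMeanEmbedding φ P m := by
  have norm_inner_le (f : H) (x : 𝒳) : ‖⟪φ x, f⟫‖ ≤ ‖φ x‖ * ‖f‖ := norm_inner_le_norm _ _
  have integrable_inner (f : H) : Integrable (fun x ↦ ⟪φ x, f⟫) P :=
    (hP.mul_const ‖f‖).mono' (hφ.inner_right f).aestronglyMeasurable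
      (.of_forall (norm_inner_le f))
  let expectation : H →ₗ[ℝ] ℝ :=
    { toFun f := ∫ x, ⟪φ x, f⟫ ∂P
      map_add' f g := by
        simp only [inner_add_right, integral_add (integrable_inner f) (integrable_inner g)]
      map_smul' c f := by
        simp only [real_inner_smul_right, integral_const_mul, RingHom.id_apply, smul_eq_mul] }
  have bound (f : H) : ‖expectation f‖ ≤ (∫ x, ‖φ x‖ ∂P) * ‖f‖ := by
    rw [← integral_mul_const]
    exact norm_integral_le_of_norm_le (hP.mul_const ‖f‖) (.of_forall (norm_inner_le f))
  refine ⟨(InnerProductSpace.toDual ℝ H).symm (expectation.mkContinuous _ bound), ?_⟩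
  exact ⟨integrable_inner, fun f ↦ by rw [InnerProductSpace.toDual_symm_apply]; rfl⟩

theorem isMeanEmbedding_empiricalMeasure [CompleteSpace H] (hφ : MeasurableGram φ) {n : ℕ}
    (x : Fin n → 𝒳) : IsMeanEmbedding φ (empiricalMeasure x) ((n : ℝ)⁻¹ • ∑ i, φ (x i)) := by
  have integrable_dirac (f : H) (i : Fin n) :
      Integrable (fun y ↦ ⟪φ y, f⟫) (Measure.dirac (x i)) :=
    integrable_dirac' (hφ.inner_right f).stronglyMeasurable enorm_lt_top
  refine ⟨fun f ↦ ?_, fun f ↦ ?_⟩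
  · obtain rfl | hn := eq_or_ne n 0
    · simp [empiricalMeasure]
    · exact (integrable_finsetSum_measure.2 fun i _ ↦ integrable_dirac f i).smul_measure
        (by simpa using hn)
  · rw [empiricalMeasure, integral_smul_measure,
      integral_finsetSum_measure fun i _ ↦ integrable_dirac f i]
    simp_rw [integral_dirac' _ _ (hφ.inner_right f).stronglyMeasurable]
    simp [real_inner_smul_left, sum_inner]

end MeasurableGram

namespace IsMeanEmbedding

variable {P Q : Measure 𝒳} {m m' : H}

theorem integral_integral_inner (hP : IsMeanEmbedding φ P m) (hQ : IsMeanEmbedding φ Q m') :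
    ∫ x, ∫ y, ⟪φ x, φ y⟫ ∂Q ∂P = ⟪m, m'⟫ := by
  have integral_inner_left (x : 𝒳) : ∫ y, ⟪φ x, φ y⟫ ∂Q = ⟪φ x, m'⟫ := by
    simpa only [real_inner_comm] using hQ.integral_inner (φ x)
  simp only [integral_inner_left, hP.integral_inner]

theorem mmd_eq_norm_sub {k : 𝒳 → 𝒳 → ℝ} (hφ : ∀ x y, ⟪φ x, φ y⟫ = k x y)
    (hP : IsMeanEmbedding φ P m) (hQ : IsMeanEmbedding φ Q m') : mmd k P Q = ‖m - m'‖ := by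
  simp only [mmd, mmdSq, ← hφ, hP.integral_integral_inner hP, hP.integral_integral_inner hQ,
    hQ.integral_integral_inner hQ, real_inner_self_eq_norm_sq]
  rw [← norm_sub_sq_real, Real.sqrt_sq (norm_nonneg _)]

theorem sub_const [IsProbabilityMeasure P] (hP : IsMeanEmbedding φ P m) :
    IsMeanEmbedding (fun x ↦ φ x - m) P 0 where
  integrable_inner f := by
    simp only [inner_sub_left]
    exact (hP.integrable_inner f).sub (integrable_const _)
  integral_inner f := by
    simp only [inner_sub_left, integral_sub (hP.integrable_inner f) (integrable_const _),
      hP.integral_inner]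
    simp

theorem integrable_norm_sub_sq [IsFiniteMeasure P] (hP : IsMeanEmbedding φ P m)
    (h : Integrable (fun x ↦ ‖φ x‖ ^ 2) P) : Integrable (fun x ↦ ‖φ x - m‖ ^ 2) P := by
  simp only [norm_sub_sq_real]
  exact (h.sub ((hP.integrable_inner m).const_mul 2)).add (integrable_const _)

theorem integral_norm_sub_sq [IsProbabilityMeasure P] (hP : IsMeanEmbedding φ P m)
    (h : Integrable (fun x ↦ ‖φ x‖ ^ 2) P) :
    ∫ x, ‖φ x - m‖ ^ 2 ∂P = ∫ x, ‖φ x‖ ^ 2 ∂P - ‖m‖ ^ 2 := by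
  have hm := (hP.integrable_inner m).const_mul 2
  simp only [norm_sub_sq_real]
  rw [integral_add (f := fun x ↦ ‖φ x‖ ^ 2 - 2 * ⟪φ x, m⟫) (h.sub hm) (integrable_const _),
    integral_sub h hm, integral_const_mul, hP.integral_inner, real_inner_self_eq_norm_sq,
    integral_const, probReal_univ, one_smul]
  ring

theorem abs_mmd_sub_mmd_le {k : 𝒳 → 𝒳 → ℝ} (hφ : ∀ x y, ⟪φ x, φ y⟫ = k x y)
    {Q' : Measure 𝒳} {p q q' : H} (hP : IsMeanEmbedding φ P p) (hQ : IsMeanEmbedding φ Q q)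
    (hQ' : IsMeanEmbedding φ Q' q') : |mmd k P Q - mmd k P Q'| ≤ ‖q - q'‖ := by
  rw [mmd_eq_norm_sub hφ hP hQ, mmd_eq_norm_sub hφ hP hQ', norm_sub_rev p q, norm_sub_rev p q']
  simpa only [dist_eq_norm] using abs_dist_sub_le q q' p

end IsMeanEmbedding

variable {Ω : Type*} [MeasurableSpace Ω] {μ : Measure Ω}

theorem integral_inner_eq_zero_of_indepFun [IsFiniteMeasure μ] (hφ : MeasurableGram φ)
    {X Y : Ω → 𝒳} (hX : Measurable X) (hY : Measurable Y) (hXY : IndepFun X Y μ)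
    (hφY : IsMeanEmbedding φ (μ.map Y) 0) : ∫ ω, ⟪φ (X ω), φ (Y ω)⟫ ∂μ = 0 := by
  have joint_law : μ.map (fun ω ↦ (X ω, Y ω)) = (μ.map X).prod (μ.map Y) :=
    (indepFun_iff_map_prod_eq_prod_map_map hX.aemeasurable hY.aemeasurable).1 hXY
  have inner_integral (x : 𝒳) : ∫ y, ⟪φ x, φ y⟫ ∂μ.map Y = 0 := by
    simpa only [real_inner_comm, inner_zero_right] using hφY.integral_inner (φ x)
  rw [← integral_map (hX.prodMk hY).aemeasurable (Measurable.aestronglyMeasurable hφ), joint_law]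
  by_cases h : Integrable (fun p : 𝒳 × 𝒳 ↦ ⟪φ p.1, φ p.2⟫) ((μ.map X).prod (μ.map Y))
  · simp only [integral_prod _ h, inner_integral, integral_zero]
  · exact integral_undef h

theorem MeasurableGram.integrable_inner_of_sq (hφ : MeasurableGram φ) {X Y : Ω → 𝒳}
    (hX : Measurable X) (hY : Measurable Y) (hX2 : Integrable (fun ω ↦ ‖φ (X ω)‖ ^ 2) μ)
    (hY2 : Integrable (fun ω ↦ ‖φ (Y ω)‖ ^ 2) μ) :
    Integrable (fun ω ↦ ⟪φ (X ω), φ (Y ω)⟫) μ := by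
  refine (hX2.add hY2).mono' (hφ.comp hX hY).aestronglyMeasurable (.of_forall fun ω ↦ ?_)
  have := norm_inner_le_norm (𝕜 := ℝ) (φ (X ω)) (φ (Y ω))
  rw [Pi.add_apply]
  nlinarith [two_mul_le_add_sq ‖φ (X ω)‖ ‖φ (Y ω)‖, sq_nonneg ‖φ (X ω)‖, sq_nonneg ‖φ (Y ω)‖]

theorem integral_norm_sum_sq_of_pairwise_indepFun [IsFiniteMeasure μ] (hφ : MeasurableGram φ)
    {ι : Type*} [Fintype ι] {X : ι → Ω → 𝒳} (hX : ∀ i, Measurable (X i))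
    (hindep : Pairwise fun i j ↦ IndepFun (X i) (X j) μ)
    (hφX : ∀ i, IsMeanEmbedding φ (μ.map (X i)) 0)
    (hX2 : ∀ i, Integrable (fun ω ↦ ‖φ (X i ω)‖ ^ 2) μ) :
    ∫ ω, ‖∑ i, φ (X i ω)‖ ^ 2 ∂μ = ∑ i, ∫ ω, ‖φ (X i ω)‖ ^ 2 ∂μ := by
  have integrable_inner (i j) := hφ.integrable_inner_of_sq (hX i) (hX j) (hX2 i) (hX2 j)
  have off_diagonal {i j : ι} (h : j ≠ i) : ∫ ω, ⟪φ (X i ω), φ (X j ω)⟫ ∂μ = 0 :=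
    integral_inner_eq_zero_of_indepFun hφ (hX i) (hX j) (hindep h.symm) (hφX j)
  calc ∫ ω, ‖∑ i, φ (X i ω)‖ ^ 2 ∂μ
      = ∫ ω, ∑ i, ∑ j, ⟪φ (X i ω), φ (X j ω)⟫ ∂μ := by
        simp only [← real_inner_self_eq_norm_sq, sum_inner, inner_sum, real_inner_comm]
    _ = ∑ i, ∑ j, ∫ ω, ⟪φ (X i ω), φ (X j ω)⟫ ∂μ := by
        rw [integral_finsetSum _ fun i _ ↦ integrable_finsetSum _ fun j _ ↦ integrable_inner i j]
        simp only [integral_finsetSum _ fun j _ ↦ integrable_inner _ j]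
    _ = ∑ i, ∫ ω, ‖φ (X i ω)‖ ^ 2 ∂μ := by
        refine Finset.sum_congr rfl fun i _ ↦ ?_
        rw [Fintype.sum_eq_single i fun j ↦ off_diagonal]
        simp only [real_inner_self_eq_norm_sq]

variable [CompleteSpace H] {Q : Measure 𝒳} {m : H} {n : ℕ} {X : Fin n → Ω → 𝒳}

theorem integral_norm_sum_sub_sq [IsProbabilityMeasure Q] (hφ : MeasurableGram φ)
    (hm : IsMeanEmbedding φ Q m) (hφ2 : Integrable (fun x ↦ ‖φ x‖ ^ 2) Q)
    (hX : ∀ i, Measurable (X i)) (hX_law : ∀ i, μ.map (X i) = Q) (hindep : iIndepFun X μ) :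
    ∫ ω, ‖∑ i, (φ (X i ω) - m)‖ ^ 2 ∂μ = n * (∫ x, ‖φ x‖ ^ 2 ∂Q - ‖m‖ ^ 2) := by
  have := hindep.isProbabilityMeasure
  have hψ : MeasurableGram fun x ↦ φ x - m := hφ.sub_const m
  have sq_meas : Measurable fun x ↦ ‖φ x - m‖ ^ 2 := hψ.norm.pow_const 2
  have sq_integrable : Integrable (fun x ↦ ‖φ x - m‖ ^ 2) Q := hm.integrable_norm_sub_sq hφ2
  rw [integral_norm_sum_sq_of_pairwise_indepFun hψ hX (fun i j h ↦ hindep.indepFun h)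
    (fun i ↦ hX_law i ▸ hm.sub_const)
    (fun i ↦ (hX_law i ▸ sq_integrable).comp_measurable (hX i))]
  have term (i : Fin n) : ∫ ω, ‖φ (X i ω) - m‖ ^ 2 ∂μ = ∫ x, ‖φ x‖ ^ 2 ∂Q - ‖m‖ ^ 2 := by
    rw [← hm.integral_norm_sub_sq hφ2, ← hX_law i,
      integral_map (hX i).aemeasurable sq_meas.aestronglyMeasurable]
  simp only [term, Finset.sum_const, Finset.card_univ, Fintype.card_fin, nsmul_eq_mul]

theorem integral_norm_sum_sub_le [IsProbabilityMeasure Q] (hφ : MeasurableGram φ) {B : ℝ≥0}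
    (hB : ∀ x, ‖φ x‖ ≤ B) (hm : IsMeanEmbedding φ Q m)
    (hX : ∀ i, Measurable (X i)) (hX_law : ∀ i, μ.map (X i) = Q) (hindep : iIndepFun X μ) :
    ∫ ω, ‖∑ i, (φ (X i ω) - m)‖ ∂μ ≤ √(n * B ^ 2) := by
  have := hindep.isProbabilityMeasure
  have sq_le (x : 𝒳) : ‖φ x‖ ^ 2 ≤ B ^ 2 := pow_le_pow_left₀ (norm_nonneg _) (hB x) 2
  have sq_integrable : Integrable (fun x ↦ ‖φ x‖ ^ 2) Q :=
    .of_bound (hφ.norm.pow_const 2).aestronglyMeasurable (B ^ 2)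
      (.of_forall fun x ↦ by simpa using sq_le x)
  have memLp : MemLp (fun ω ↦ ‖∑ i, (φ (X i ω) - m)‖) 2 μ := by
    refine .of_bound ((hφ.sub_const m).norm_sum hX).aestronglyMeasurable (∑ _ : Fin n, (B + ‖m‖))
      (.of_forall fun ω ↦ ?_)
    rw [norm_norm]
    exact norm_sum_le_of_le _ fun i _ ↦
      (norm_sub_le (φ (X i ω)) m).trans (add_le_add (hB _) le_rfl)
  have second_moment : ∫ x, ‖φ x‖ ^ 2 ∂Q ≤ B ^ 2 := by
    simpa using integral_mono sq_integrable (integrable_const _) sq_le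
  refine (integral_le_sqrt_integral_sq memLp).trans (Real.sqrt_le_sqrt ?_)
  rw [integral_norm_sum_sub_sq hφ hm sq_integrable hX hX_law hindep]
  gcongr
  linarith [sq_nonneg ‖m‖]

theorem measureReal_lt_norm_sum_sub_le [IsProbabilityMeasure Q] (hφ : MeasurableGram φ) {B : ℝ≥0}
    (hB : ∀ x, ‖φ x‖ ≤ B) (hm : IsMeanEmbedding φ Q m)
    (hX : ∀ i, Measurable (X i)) (hX_law : ∀ i, μ.map (X i) = Q) (hindep : iIndepFun X μ)
    {δ : ℝ} (hδ : δ ∈ Set.Ioo (0 : ℝ) 1) :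
    μ.real {ω | √(n * B ^ 2) + √(2 * (n * B ^ 2) * Real.log (1 / δ)) <
      ‖∑ i, (φ (X i ω) - m)‖} ≤ δ := by
  have := hindep.isProbabilityMeasure
  have bounded_differences :
      HasBoundedDifferences (fun x : Fin n → 𝒳 ↦ ‖∑ i, (φ (x i) - m)‖) fun _ ↦ 2 * B := by
    refine hasBoundedDifferences_norm_sum (ψ := fun _ x ↦ φ x - m) fun _ x y ↦ ?_
    rw [sub_sub_sub_cancel_right, NNReal.coe_mul, NNReal.coe_two, two_mul]
    exact (norm_sub_le _ _).trans (add_le_add (hB x) (hB y))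
  have subgaussian : HasSubgaussianMGF (fun ω ↦ ‖∑ i, (φ (X i ω) - m)‖ -
      ∫ ω', ‖∑ i, (φ (X i ω') - m)‖ ∂μ) (n * B ^ 2) μ := by
    simpa [-Finset.sum_sub_distrib] using bounded_differences.hasSubgaussianMGF_of_iIndepFun
      ((hφ.sub_const m).norm_sum measurable_pi_apply) hX hindep
  have mean_le := integral_norm_sum_sub_le hφ hB hm hX hX_law hindep
  refine le_trans (measureReal_mono fun ω hω ↦ ?_) (measureReal_sqrt_log_lt_le subgaussian hδ)
  rw [Set.mem_ofPred_eq] at hω ⊢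
  push_cast
  linarith

theorem measureReal_lt_norm_sub_average_le [IsProbabilityMeasure Q] (hφ : MeasurableGram φ)
    {B : ℝ≥0} (hB : ∀ x, ‖φ x‖ ≤ B) (hm : IsMeanEmbedding φ Q m) (hn : 0 < n)
    (hX : ∀ i, Measurable (X i)) (hX_law : ∀ i, μ.map (X i) = Q) (hindep : iIndepFun X μ)
    {δ : ℝ} (hδ : δ ∈ Set.Ioo (0 : ℝ) 1) :
    μ.real {ω | √(B ^ 2 / n) + √(2 * B ^ 2 * Real.log (1 / δ) / n) <
      ‖m - (n : ℝ)⁻¹ • ∑ i, φ (X i ω)‖} ≤ δ := by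
  have := hindep.isProbabilityMeasure
  have sqrt_mul_nat (t : ℝ) : √(n * t) = n * √(t / n) := by
    rw [← Real.sqrt_sq n.cast_nonneg, ← Real.sqrt_mul (by positivity), Real.sqrt_sq (by positivity)]
    congr 1
    field_simp
  have average_error (ω : Ω) :
      n * ‖m - (n : ℝ)⁻¹ • ∑ i, φ (X i ω)‖ = ‖∑ i, (φ (X i ω) - m)‖ := by
    have sum_eq : ∑ i, (φ (X i ω) - m) = (n : ℝ) • ((n : ℝ)⁻¹ • ∑ i, φ (X i ω) - m) := by
      rw [smul_sub, smul_inv_smul₀ (by positivity)]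
      simp [Nat.cast_smul_eq_nsmul]
    rw [sum_eq, norm_smul, Real.norm_natCast, norm_sub_rev]
  refine le_trans (measureReal_mono fun ω hω ↦ ?_)
    (measureReal_lt_norm_sum_sub_le hφ hB hm hX hX_law hindep hδ)
  rw [Set.mem_ofPred_eq] at hω ⊢
  rw [← average_error, mul_left_comm, mul_assoc, sqrt_mul_nat, sqrt_mul_nat, ← mul_add]
  exact mul_lt_mul_of_pos_left hω (by positivity)

end FeatureMap

theorem mmd_empirical_concentration_general
    {𝒳 Ω : Type*} [MeasurableSpace 𝒳] [MeasurableSpace Ω]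
    {k : 𝒳 → 𝒳 → ℝ} (hk_meas : Measurable (Function.uncurry k)) (hk_pd : IsPosDefKernel k)
    {Ck : ℝ} (hCk : ∀ x, k x x ≤ Ck) {μ : Measure Ω} {Q : Measure 𝒳} [IsProbabilityMeasure Q]
    {n : ℕ} (hn : 0 < n) {X : Fin n → Ω → 𝒳} (hX_meas : ∀ i, Measurable (X i))
    (hX_law : ∀ i, μ.map (X i) = Q) (hX_indep : iIndepFun X μ)
    {δ : ℝ} (hδ : δ ∈ Set.Ioo (0 : ℝ) 1) :
    1 - ENNReal.ofReal δ ≤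
      μ {ω | ∀ P : Measure 𝒳, Integrable (fun x ↦ √(k x x)) P →
        |mmd k P Q - mmd k P (empiricalMeasure fun i ↦ X i ω)| ≤
          √(Ck / n) + √(2 * Ck * Real.log (1 / δ) / n)} := by
  have := hX_indep.isProbabilityMeasure
  obtain ⟨H, _, _, _, φ, hφ⟩ := hk_pd.exists_featureMap
  have gram : MeasurableGram φ := by
    simpa only [MeasurableGram, hφ, Function.uncurry_def] using hk_meas
  have norm_eq (x : 𝒳) : ‖φ x‖ = √(k x x) := by rw [norm_eq_sqrt_real_inner, hφ]
  have hB (x : 𝒳) : ‖φ x‖ ≤ Real.toNNReal √Ck := by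
    rw [norm_eq, Real.coe_toNNReal _ (Real.sqrt_nonneg _)]
    exact Real.sqrt_le_sqrt (hCk x)
  obtain ⟨x₀⟩ := nonempty_of_isProbabilityMeasure Q
  have Ck_nonneg : 0 ≤ Ck := (hφ x₀ x₀ ▸ real_inner_self_nonneg).trans (hCk x₀)
  obtain ⟨m, hm⟩ := gram.exists_isMeanEmbedding (P := Q)
    (.of_bound gram.norm.aestronglyMeasurable _
      (.of_forall fun x ↦ (norm_norm (φ x)).trans_le (hB x)))
  have bad_le := measureReal_lt_norm_sub_average_le gram hB hm hn hX_meas hX_law hX_indep hδ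
  rw [Real.coe_toNNReal _ (Real.sqrt_nonneg _), Real.sq_sqrt Ck_nonneg] at bad_le
  refine (one_sub_ofReal_le_measure_compl bad_le).trans (measure_mono fun ω hω P hP ↦ ?_)
  obtain ⟨p, hp⟩ := gram.exists_isMeanEmbedding (P := P) (by simpa only [norm_eq] using hP)
  exact (hp.abs_mmd_sub_mmd_le hφ hm (gram.isMeanEmbedding_empiricalMeasure _)).trans
    (not_lt.1 hω)

/-- **MMD sample complexity for the empirical measure** (root-`n` concentration).
Let `k` be a symmetric positive-definite kernel bounded by `Ck`, `Q` a probability measure,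
and `X 1, …, X n` i.i.d. samples from `Q` defined on a probability space `(Ω, μ)`. Then for
any probability measure `P` and any `δ ∈ (0,1)`, with probability at least `1 − δ`,
`|MMD_k(P,Q) − MMD_k(P,Qⁿ)| ≤ 2√(Ck/n) + √(2 Ck log(1/δ)/n)`, where `Qⁿ` is the empirical
measure of the samples; in particular the error is `O(n^{-1/2})` with high probability. -/
theorem mmd_empirical_concentration
    {𝒳 Ω : Type*} [MeasurableSpace 𝒳] [MeasurableSpace Ω]
    (k : 𝒳 → 𝒳 → ℝ) (hk_meas : Measurable (Function.uncurry k))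
    (hk_pd : IsPosDefKernel k)
    (Ck : ℝ) (hCk : ∀ x x', k x x' ≤ Ck)
    (μ : Measure Ω) [IsProbabilityMeasure μ]
    (Q : Measure 𝒳) [IsProbabilityMeasure Q]
    (n : ℕ) (hn : 0 < n)
    (X : Fin n → Ω → 𝒳) (hX_meas : ∀ i, Measurable (X i))
    (hX_law : ∀ i, Measure.map (X i) μ = Q)
    (hX_indep : ProbabilityTheory.iIndepFun X μ)
    (P : Measure 𝒳) [IsProbabilityMeasure P]
    (δ : ℝ) (hδ : δ ∈ Set.Ioo (0 : ℝ) 1) :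
    1 - ENNReal.ofReal δ ≤
      μ {ω | |mmd k P Q - mmd k P (empiricalMeasure (fun i => X i ω))| ≤
        2 * Real.sqrt (Ck / n) + Real.sqrt (2 * Ck * Real.log (1 / δ) / n)} := by
  have diag_meas : Measurable fun x ↦ √(k x x) :=
    (hk_meas.comp (measurable_id'.prodMk measurable_id')).sqrt
  have hP : Integrable (fun x ↦ √(k x x)) P :=
    .of_bound diag_meas.aestronglyMeasurable √Ck (.of_forall fun x ↦ by
      rw [Real.norm_of_nonneg (Real.sqrt_nonneg _)]
      exact Real.sqrt_le_sqrt (hCk x x))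
  refine (mmd_empirical_concentration_general hk_meas hk_pd (fun x ↦ hCk x x) hn hX_meas hX_law
    hX_indep hδ).trans (measure_mono fun ω hω ↦ (hω P hP).trans ?_)
  linarith [Real.sqrt_nonneg (Ck / n)]
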